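/- Fix a prime power q. Let f and g be monic irreducible polynomials over F_q with f(0) ≠ 0 and g(0) ≠ 0, deg f = deg g, and ord f = ord g. Let λ_1, …, λ_m be positive integers, and let A be the block-diagonal matrix whose blocks are the companion matrices of f^{λ_1}, …, f^{λ_m} and B the block-diagonal matrix whose blocks are the companion matrices of g^{λ_1}, …, g^{λ_m}. Then A and B, viewed as maps of (F_q)^N with N = (deg f)·(λ_1 + ⋯ + λ_m), are dynamically equivalent. -/

import Mathlib

/-!
A block-diagonal matrix acts as the product of its blocks, and conjugacy passes to products, so
one block suffices. In the power basis of `F[X] / (f ^ k)`, the companion matrix of `f ^ k` is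
multiplication by `X`, which is a bijection since `f(0) ≠ 0`.

Two bijections of finite sets are conjugate as soon as their `n`-th iterates have equally many
fixed points for every `n > 0` (`dynEquiv_of_card_fixed`): by induction over divisors these
numbers determine how many points have a given exact period, hence the cycle type.

The fixed points of the `n`-th iterate are the elements of `F[X] / (f ^ k)` annihilated by
`X ^ n - 1`, and there are `q ^ (j * deg f)` of them, where `j ≤ k` is maximal with
`f ^ j ∣ X ^ n - 1` (`card_annihilated`). This `j` is the same for `f` and `g`: `f` divides
`X ^ n - 1` iff `ord f ∣ n`, and every irreducible factor of `X ^ n - 1` has the same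
multiplicity, the largest power of the characteristic dividing `n`
(`pow_dvd_X_pow_sub_one_iff`).
-/

open Polynomial

/-- Two self-maps (of possibly different sets) are *dynamically equivalent* if they are
conjugate by a bijection, i.e. their functional graphs are isomorphic. -/
def DynEquiv {X Y : Type*} (f : X → X) (g : Y → Y) : Prop :=
  ∃ σ : X ≃ Y, ∀ x, σ (f x) = g (σ x)

/-- The order of a polynomial `f` (with `f(0) ≠ 0`): the least positive `e` with
`f ∣ X^e - 1`. -/
noncomputable def polyOrder {F : Type*} [Field F] (f : F[X]) : ℕ :=
  sInf {e : ℕ | 0 < e ∧ f ∣ X ^ e - 1}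

/-- The companion matrix of a monic polynomial `p` (of degree `p.natDegree`): ones on
the subdiagonal and the negatives of the coefficients of `p` in the last column. -/
def companion {F : Type*} [Field F] (p : F[X]) :
    Matrix (Fin p.natDegree) (Fin p.natDegree) F :=
  Matrix.of fun i j =>
    if (j : ℕ) + 1 = p.natDegree then -p.coeff i
    else if (i : ℕ) = (j : ℕ) + 1 then 1 else 0

/-! ### Bijections of finite sets and their cycle types -/

theorem minimalPeriod_eq_card_support {α : Type*} [Fintype α] [DecidableEq α]
    {σ c : Equiv.Perm α} (hc : c ∈ σ.cycleFactorsFinset) {x : α} (hx : x ∈ c.support) :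
    Function.minimalPeriod σ x = c.support.card := by
  have hcx := Equiv.Perm.cycle_is_cycleOf hx hc
  have hon : σ.IsCycleOn c.support := by
    rw [hcx]; exact σ.isCycleOn_support_cycleOf x
  refine (Nat.dvd_right_iff_eq).1 fun k => ?_
  rw [← hon.pow_apply_eq hx, ← Function.isPeriodicPt_iff_minimalPeriod_dvd,
    ← Equiv.Perm.iterate_eq_pow]
  rfl

theorem card_minimalPeriod_eq {α : Type*} [Fintype α] [DecidableEq α] (σ : Equiv.Perm α)
    {n : ℕ} (hn : 2 ≤ n) :
    (Finset.univ.filter fun x => Function.minimalPeriod σ x = n).card =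
      σ.cycleType.count n * n := by
  have h1 : (Finset.univ.filter fun x => Function.minimalPeriod σ x = n) =
      (σ.cycleFactorsFinset.filter fun c => c.support.card = n).biUnion
        Equiv.Perm.support := by
    ext x
    simp only [Finset.mem_filter, Finset.mem_univ, true_and, Finset.mem_biUnion]
    constructor
    · intro h
      have hx : x ∈ σ.support := by
        rw [Equiv.Perm.mem_support]
        intro hfix
        have : Function.minimalPeriod σ x = 1 :=
          Function.minimalPeriod_eq_one_iff_isFixedPt.2 hfix
        omega
      have hmem := Equiv.Perm.cycleOf_mem_cycleFactorsFinset_iff.2 hx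
      have hxs : x ∈ (σ.cycleOf x).support :=
        Equiv.Perm.mem_support_cycleOf_iff.2 ⟨Equiv.Perm.SameCycle.refl _ _, hx⟩
      exact ⟨σ.cycleOf x, ⟨hmem, by rw [← minimalPeriod_eq_card_support hmem hxs, h]⟩, hxs⟩
    · rintro ⟨c, ⟨hc, hcn⟩, hx⟩
      rw [minimalPeriod_eq_card_support hc hx, hcn]
  rw [h1, Finset.card_biUnion]
  · rw [Finset.sum_congr rfl (g := fun _ => n) (fun c hc => (Finset.mem_filter.1 hc).2),
      Finset.sum_const, smul_eq_mul, Equiv.Perm.cycleType_def, Multiset.count_map]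
    congr 1
    rw [Finset.card_def, Finset.filter_val]
    congr 1
    exact Multiset.filter_congr fun c _ => eq_comm
  · intro c hc d hd hcd
    exact Equiv.Perm.Disjoint.disjoint_support
      (σ.cycleFactorsFinset_pairwise_disjoint (Finset.mem_filter.1 hc).1
        (Finset.mem_filter.1 hd).1 hcd)

theorem card_isPeriodicPt {α : Type*} [Fintype α] [DecidableEq α] (σ : α → α)
    {n : ℕ} (hn : 0 < n) :
    Nat.card {x // σ^[n] x = x} =
      ∑ d ∈ n.divisors, (Finset.univ.filter fun x => Function.minimalPeriod σ x = d).card := by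
  rw [Nat.card_eq_fintype_card, Fintype.card_subtype,
    Finset.card_eq_sum_card_fiberwise (f := Function.minimalPeriod σ) (t := n.divisors)]
  · refine Finset.sum_congr rfl fun d hd => ?_
    congr 1
    ext x
    simp only [Finset.mem_filter, Finset.mem_univ, true_and, and_iff_right_iff_imp]
    rintro rfl
    exact Function.isPeriodicPt_iff_minimalPeriod_dvd.2 (Nat.dvd_of_mem_divisors hd)
  · intro x hx
    have hx' : Function.IsPeriodicPt σ n x := (Finset.mem_filter.1 hx).2
    simpa [hn.ne'] using hx'.minimalPeriod_dvd

/-- The numbers of fixed points of the iterates determine the numbers of points of each exact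
period; this is Möbius inversion, in the form of an induction over the divisors. -/
theorem card_minimalPeriod_congr {α β : Type*} [Fintype α] [DecidableEq α]
    [Fintype β] [DecidableEq β] (σ : α → α) (τ : β → β)
    (h : ∀ n, 0 < n → Nat.card {x // σ^[n] x = x} = Nat.card {x // τ^[n] x = x})
    (n : ℕ) (hn : 0 < n) :
    (Finset.univ.filter fun x => Function.minimalPeriod σ x = n).card =
      (Finset.univ.filter fun x => Function.minimalPeriod τ x = n).card := by
  induction n using Nat.strong_induction_on with
  | _ n ih =>
    have h1 := h n hn
    rw [card_isPeriodicPt σ hn, card_isPeriodicPt τ hn,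
      ← Nat.cons_self_properDivisors hn.ne', Finset.sum_cons, Finset.sum_cons,
      Finset.sum_congr rfl fun d hd => ih d (Nat.mem_properDivisors.1 hd).2
        (Nat.pos_of_mem_properDivisors hd)] at h1
    exact Nat.add_right_cancel h1

/-- Bijections of finite sets whose iterates have equally many fixed points have the same cycle
type, hence are conjugate. -/
theorem dynEquiv_of_card_fixed {α β : Type*} [Finite α] [Finite β]
    {f : α → α} {g : β → β} (hf : f.Bijective) (hg : g.Bijective)
    (hαβ : Nat.card α = Nat.card β)
    (h : ∀ n, 0 < n → Nat.card {x // f^[n] x = x} = Nat.card {x // g^[n] x = x}) :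
    DynEquiv f g := by
  classical
  have := Fintype.ofFinite α
  have := Fintype.ofFinite β
  obtain ⟨e⟩ := Finite.card_eq.1 hαβ
  let σ : Equiv.Perm α := Equiv.ofBijective f hf
  let τ : Equiv.Perm α := (e.trans (Equiv.ofBijective g hg)).trans e.symm
  have hτ : ∀ n x, e (τ^[n] x) = g^[n] (e x) := fun n x =>
    Function.Semiconj.iterate_right (f := e) (ga := τ) (gb := g) (fun y => by simp [τ]) n x
  have key : ∀ n, 0 < n → Nat.card {x // σ^[n] x = x} = Nat.card {x // τ^[n] x = x} := by
    intro n hn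
    rw [show Nat.card {x // σ^[n] x = x} = Nat.card {x // g^[n] x = x} from h n hn]
    refine (Nat.card_congr (e.subtypeEquiv fun x => ?_)).symm
    rw [← hτ, e.apply_eq_iff_eq]
  have hct : σ.cycleType = τ.cycleType := by
    ext n
    by_cases hn : 2 ≤ n
    · have := card_minimalPeriod_congr σ τ key n (by omega)
      rw [card_minimalPeriod_eq σ hn, card_minimalPeriod_eq τ hn] at this
      exact Nat.eq_of_mul_eq_mul_right (by omega) this
    · rw [Multiset.count_eq_zero_of_notMem
          (fun hm => hn (Equiv.Perm.two_le_of_mem_cycleType hm)),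
        Multiset.count_eq_zero_of_notMem
          (fun hm => hn (Equiv.Perm.two_le_of_mem_cycleType hm))]
  obtain ⟨π, hπ⟩ := isConj_iff.1 (Equiv.Perm.isConj_iff_cycleType_eq.2 hct)
  refine ⟨π.trans e, fun x => ?_⟩
  have h2 : π (f x) = τ (π x) := by rw [← hπ]; simp [σ]
  have h3 := hτ 1 (π x)
  simp only [Function.iterate_one] at h3
  simp only [Equiv.trans_apply]
  rw [h2, h3]

/-! ### Reduction to multiplication by the root -/

theorem dynEquiv_trans {X Y Z : Type*} {f : X → X} {g : Y → Y} {h : Z → Z}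
    (h1 : DynEquiv f g) (h2 : DynEquiv g h) : DynEquiv f h := by
  obtain ⟨σ, hσ⟩ := h1
  obtain ⟨τ, hτ⟩ := h2
  exact ⟨σ.trans τ, fun x => by simp [hσ, hτ]⟩

theorem dynEquiv_symm {X Y : Type*} {f : X → X} {g : Y → Y}
    (h : DynEquiv f g) : DynEquiv g f := by
  obtain ⟨σ, hσ⟩ := h
  exact ⟨σ.symm, fun y => by rw [Equiv.symm_apply_eq, hσ, Equiv.apply_symm_apply]⟩

/-- A block-diagonal matrix acts as the product of the actions of its blocks. -/
theorem dynEquiv_blockDiagonal {F : Type*} [Field F] {ι : Type*} [Fintype ι] [DecidableEq ι]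
    {a : ι → ℕ} (A : ∀ i, Matrix (Fin (a i)) (Fin (a i)) F) :
    DynEquiv (Matrix.blockDiagonal' A).mulVec
      (fun (v : ∀ i, Fin (a i) → F) i => (A i).mulVec (v i)) := by
  refine ⟨Equiv.piCurry (fun _ _ => F), fun x => ?_⟩
  funext i j
  change (Matrix.blockDiagonal' A).mulVec x ⟨i, j⟩ = (A i).mulVec (fun j => x ⟨i, j⟩) j
  simp only [Matrix.mulVec, dotProduct]
  rw [Fintype.sum_sigma, Finset.sum_eq_single i]
  · simp
  · intro k _ hk
    exact Finset.sum_eq_zero fun l _ => by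
      rw [Matrix.blockDiagonal'_apply_ne _ _ _ hk.symm, zero_mul]
  · simp

theorem dynEquiv_pi {ι : Type*} {X Y : ι → Type*} {f : ∀ i, X i → X i} {g : ∀ i, Y i → Y i}
    (h : ∀ i, DynEquiv (f i) (g i)) :
    DynEquiv (fun (v : ∀ i, X i) i => f i (v i)) (fun (v : ∀ i, Y i) i => g i (v i)) := by
  choose σ hσ using h
  exact ⟨Equiv.piCongrRight σ, fun x => funext fun i => hσ i (x i)⟩

/-- In the power basis, multiplication by the root of `p` is the companion matrix of `p`. -/
theorem dynEquiv_companion {F : Type*} [Field F] {p : F[X]} (hp : p.Monic) :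
    DynEquiv (fun v : AdjoinRoot p => AdjoinRoot.root p * v) (companion p).mulVec := by
  have hm := AdjoinRoot.minpoly_powerBasis_gen_of_monic hp
  have hL : Algebra.leftMulMatrix (AdjoinRoot.powerBasis' hp).basis (AdjoinRoot.root p) =
      companion p := by
    have h := (AdjoinRoot.powerBasis' hp).leftMulMatrix
    rw [PowerBasis.minpolyGen_eq, AdjoinRoot.powerBasis'_gen] at h
    rw [AdjoinRoot.powerBasis_gen] at hm
    rw [hm] at h
    exact h
  refine ⟨(AdjoinRoot.powerBasis' hp).basis.equivFun.toEquiv, fun v => ?_⟩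
  rw [← hL]
  exact (Algebra.leftMulMatrix_mulVec_repr (AdjoinRoot.powerBasis' hp).basis
    (AdjoinRoot.root p) v).symm

/-! ### Counting the fixed points of the iterates -/

/-- If `f ^ j` is the exact common power of `f` in `h` and `f ^ k`, the elements of
`F[X] / (f ^ k)` killed by `h` are the multiples of `f ^ (k - j)`, a copy of `F[X] / (f ^ j)`. -/
theorem card_annihilated {F : Type*} [Field F] [Fintype F] {f : F[X]} (hfm : f.Monic)
    (hfi : Irreducible f) {h : F[X]} {j k : ℕ} (hjk : j ≤ k) (hj : f ^ j ∣ h)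
    (hj' : j < k → ¬ f ^ (j + 1) ∣ h) :
    Nat.card {v : AdjoinRoot (f ^ k) // AdjoinRoot.mk (f ^ k) h * v = 0} =
      Fintype.card F ^ (f.natDegree * j) := by
  have hf0 : f ≠ 0 := hfm.ne_zero
  have hkj : f ^ k = f ^ (k - j) * f ^ j := by rw [← pow_add, Nat.sub_add_cancel hjk]
  let L : F[X] →ₗ[F[X]] F[X] ⧸ Ideal.span {f ^ k} :=
    (Ideal.span {f ^ k}).mkQ ∘ₗ LinearMap.mulLeft F[X] (f ^ (k - j))
  have hL : ∀ W, L W = AdjoinRoot.mk (f ^ k) (f ^ (k - j) * W) := fun W => rfl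
  have hker : L.ker = Ideal.span {f ^ j} := by
    ext W
    rw [LinearMap.mem_ker, hL, Ideal.mem_span_singleton]
    refine AdjoinRoot.mk_eq_zero.trans ?_
    rw [hkj, mul_dvd_mul_iff_left (pow_ne_zero _ hf0)]
  have hrange : ∀ v : AdjoinRoot (f ^ k),
      AdjoinRoot.mk (f ^ k) h * v = 0 ↔ v ∈ (L.range : Set (F[X] ⧸ Ideal.span {f ^ k})) := by
    intro v
    obtain ⟨V, rfl⟩ := AdjoinRoot.mk_surjective v
    obtain ⟨u, rfl⟩ := hj
    have h1 : AdjoinRoot.mk (f ^ k) (f ^ j * u) * AdjoinRoot.mk (f ^ k) V = 0 ↔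
        f ^ (k - j) ∣ V := by
      rw [← map_mul, AdjoinRoot.mk_eq_zero, hkj, mul_comm (f ^ (k - j)), mul_assoc,
        mul_dvd_mul_iff_left (pow_ne_zero _ hf0)]
      rcases hjk.eq_or_lt with rfl | hlt
      · simp
      · have hu : ¬ f ∣ u := fun hu => hj' hlt (by rw [pow_succ]; exact mul_dvd_mul_left _ hu)
        exact ⟨fun h => (hfi.coprime_iff_not_dvd.2 hu).pow_left.dvd_of_dvd_mul_left h,
          fun h => h.mul_left u⟩
    rw [h1]
    constructor
    · rintro ⟨W, rfl⟩
      exact ⟨W, rfl⟩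
    · rintro ⟨W, hW⟩
      rw [hL] at hW
      have h2 := AdjoinRoot.mk_eq_mk.1 hW
      have h3 : f ^ (k - j) ∣ f ^ (k - j) * W - V := (Dvd.intro _ hkj.symm).trans h2
      exact (dvd_sub_right (dvd_mul_right _ _)).1 h3
  have e : (AdjoinRoot (f ^ j)) ≃ L.range :=
    ((Submodule.quotEquivOfEq _ _ hker.symm).trans L.quotKerEquivRange).toEquiv
  have hm : (f ^ j).Monic := hfm.pow j
  rw [Nat.card_congr (Equiv.subtypeEquivRight hrange)]
  refine (Nat.card_congr e).symm.trans ?_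
  have := hm.finite_adjoinRoot
  have hfr : Module.finrank F (AdjoinRoot (f ^ j)) = f.natDegree * j := by
    rw [(AdjoinRoot.powerBasis' hm).finrank, AdjoinRoot.powerBasis'_dim, hfm.natDegree_pow,
      mul_comm]
  rw [Module.natCard_eq_pow_finrank (K := F), hfr, Nat.card_eq_fintype_card]

theorem isUnit_root {F : Type*} [Field F] {p : F[X]} (hp0 : p.coeff 0 ≠ 0) :
    IsUnit (AdjoinRoot.root p) := by
  have h1 : IsCoprime (X : F[X]) p :=
    (irreducible_X.coprime_iff_not_dvd).2 (by rwa [X_dvd_iff])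
  obtain ⟨a, b, hab⟩ := h1
  have h2 := congrArg (AdjoinRoot.mk p) hab
  simp only [map_add, map_mul, AdjoinRoot.mk_self, mul_zero, add_zero, map_one,
    AdjoinRoot.mk_X] at h2
  exact IsUnit.of_mul_eq_one _ ((mul_comm _ _).trans h2)

theorem dvd_X_pow_sub_one_iff_orderOf {F : Type*} [Field F] {f : F[X]} {n : ℕ} :
    f ∣ X ^ n - 1 ↔ orderOf (AdjoinRoot.root f) ∣ n := by
  rw [← AdjoinRoot.mk_eq_zero, map_sub, map_pow, map_one, AdjoinRoot.mk_X, sub_eq_zero,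
    orderOf_dvd_iff_pow_eq_one]

theorem dvd_X_pow_sub_one_iff {F : Type*} [Field F] [Fintype F] {f : F[X]} (hfm : f.Monic)
    (hf0 : f.coeff 0 ≠ 0) {n : ℕ} :
    f ∣ X ^ n - 1 ↔ polyOrder f ∣ n := by
  have := hfm.finite_adjoinRoot
  have : Finite (AdjoinRoot f) := Module.finite_of_finite F
  have hpos : 0 < orderOf (AdjoinRoot.root f) := by
    rw [orderOf_pos_iff]
    obtain ⟨u, hu⟩ := isUnit_root hf0
    rw [← hu]
    exact Units.isOfFinOrder_val.2 (isOfFinOrder_of_finite u)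
  have hmem : orderOf (AdjoinRoot.root f) ∈ {e : ℕ | 0 < e ∧ f ∣ X ^ e - 1} :=
    ⟨hpos, dvd_X_pow_sub_one_iff_orderOf.2 dvd_rfl⟩
  have h : polyOrder f = orderOf (AdjoinRoot.root f) := by
    have h1 := Nat.sInf_mem ⟨_, hmem⟩
    exact le_antisymm (Nat.sInf_le hmem)
      (Nat.le_of_dvd h1.1 (dvd_X_pow_sub_one_iff_orderOf.1 h1.2))
  rw [h, dvd_X_pow_sub_one_iff_orderOf]

theorem pow_dvd_squarefree_pow_iff {R : Type*} [CommRing R] [IsDomain R] {f s : R}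
    (hf : Prime f) (hs : Squarefree s) (hfs : f ∣ s) (i N : ℕ) : f ^ i ∣ s ^ N ↔ i ≤ N := by
  obtain ⟨u, rfl⟩ := hfs
  have hu : ¬ f ∣ u := fun h => hf.not_isUnit (hs f (mul_dvd_mul_left f h))
  constructor
  · intro h
    by_contra hlt
    have h1 : f ^ (N + 1) ∣ (f * u) ^ N := (pow_dvd_pow f (by omega)).trans h
    rw [mul_pow, pow_succ, mul_dvd_mul_iff_left (pow_ne_zero _ hf.ne_zero)] at h1
    exact hu (hf.dvd_of_dvd_pow h1)
  · intro h
    exact (pow_dvd_pow f h).trans (by rw [mul_pow]; exact dvd_mul_right _ _)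

/-- Writing `n = p ^ a * m` with `p ∤ m`, one has `X ^ n - 1 = (X ^ m - 1) ^ (p ^ a)` with
`X ^ m - 1` squarefree. So all irreducible factors have multiplicity `p ^ a`. -/
theorem pow_dvd_X_pow_sub_one_iff {F : Type*} [Field F] [Fintype F] {n : ℕ} (hn : 0 < n) :
    ∃ N : ℕ, ∀ f : F[X], Irreducible f → ∀ i, 0 < i →
      (f ^ i ∣ X ^ n - 1 ↔ f ∣ X ^ n - 1 ∧ i ≤ N) := by
  obtain ⟨p, hp⟩ := CharP.exists F
  have hpp : p.Prime := CharP.char_is_prime F p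
  have : Fact p.Prime := ⟨hpp⟩
  obtain ⟨a, m, hm, rfl⟩ := Nat.exists_eq_pow_mul_and_not_dvd hn.ne' p hpp.ne_one
  have hX : (X : F[X]) ^ (p ^ a * m) - 1 = (X ^ m - 1) ^ p ^ a := by
    rw [sub_pow_char_pow, one_pow, ← pow_mul, mul_comm m]
  have hs : Squarefree ((X : F[X]) ^ m - 1) :=
    (X_pow_sub_one_separable_iff.2 (by rwa [Ne, CharP.cast_eq_zero_iff F p])).squarefree
  refine ⟨p ^ a, fun f hf i hi => ?_⟩
  rw [hX]
  constructor
  · intro h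
    have h1 := (dvd_pow_self f hi.ne').trans h
    exact ⟨h1, (pow_dvd_squarefree_pow_iff hf.prime hs (hf.prime.dvd_of_dvd_pow h1) _ _).1 h⟩
  · rintro ⟨h1, h2⟩
    exact (pow_dvd_squarefree_pow_iff hf.prime hs (hf.prime.dvd_of_dvd_pow h1) _ _).2 h2

/-- The case of a single block. -/
theorem dynEquiv_root {F : Type*} [Field F] [Fintype F]
    {f g : F[X]} (hfm : f.Monic) (hgm : g.Monic)
    (hfi : Irreducible f) (hgi : Irreducible g)
    (hf0 : f.coeff 0 ≠ 0) (hg0 : g.coeff 0 ≠ 0)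
    (hdeg : f.natDegree = g.natDegree) (hord : polyOrder f = polyOrder g) (k : ℕ) :
    DynEquiv (fun v : AdjoinRoot (f ^ k) => AdjoinRoot.root (f ^ k) * v)
      (fun v : AdjoinRoot (g ^ k) => AdjoinRoot.root (g ^ k) * v) := by
  have := (hfm.pow k).finite_adjoinRoot
  have := (hgm.pow k).finite_adjoinRoot
  have : Finite (AdjoinRoot (f ^ k)) := Module.finite_of_finite F
  have : Finite (AdjoinRoot (g ^ k)) := Module.finite_of_finite F
  have hfix : ∀ (f : F[X]) (n : ℕ),
      Nat.card {v // (fun v : AdjoinRoot (f ^ k) => AdjoinRoot.root (f ^ k) * v)^[n] v = v} =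
        Nat.card {v : AdjoinRoot (f ^ k) // AdjoinRoot.mk (f ^ k) (X ^ n - 1) * v = 0} := by
    intro f n
    refine Nat.card_congr (Equiv.subtypeEquivRight fun v => ?_)
    rw [mul_left_iterate, map_sub, map_pow, AdjoinRoot.mk_X, map_one, sub_mul, one_mul,
      sub_eq_zero]
  have hunit : ∀ f : F[X], f.coeff 0 ≠ 0 → IsUnit (AdjoinRoot.root (f ^ k)) := by
    intro f hf0
    refine isUnit_root ?_
    rw [coeff_zero_eq_eval_zero] at hf0 ⊢
    rw [eval_pow]
    exact pow_ne_zero k hf0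
  refine dynEquiv_of_card_fixed (IsUnit.isUnit_iff_mulLeft_bijective.1 (hunit f hf0))
    (IsUnit.isUnit_iff_mulLeft_bijective.1 (hunit g hg0)) ?_ fun n hn => ?_
  · have hcard : ∀ f : F[X], f.Monic → Irreducible f →
        Nat.card (AdjoinRoot (f ^ k)) = Fintype.card F ^ (f.natDegree * k) := by
      intro f hfm hfi
      rw [← card_annihilated hfm hfi le_rfl (dvd_refl (f ^ k)) (fun h => absurd h (lt_irrefl k))]
      refine Nat.card_congr (Equiv.subtypeUnivEquiv fun v => ?_).symm
      rw [AdjoinRoot.mk_self, zero_mul]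
    rw [hcard f hfm hfi, hcard g hgm hgi, hdeg]
  · rw [hfix, hfix]
    have hiff : ∀ i, f ^ i ∣ X ^ n - 1 ↔ g ^ i ∣ X ^ n - 1 := by
      obtain ⟨N, hN⟩ := pow_dvd_X_pow_sub_one_iff (F := F) hn
      intro i
      rcases Nat.eq_zero_or_pos i with rfl | hi
      · simp
      · rw [hN f hfi i hi, hN g hgi i hi, dvd_X_pow_sub_one_iff hfm hf0,
          dvd_X_pow_sub_one_iff hgm hg0, hord]
    classical
    let j := Nat.findGreatest (fun i => f ^ i ∣ (X : F[X]) ^ n - 1) k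
    have hjk : j ≤ k := Nat.findGreatest_le k
    have hj : f ^ j ∣ (X : F[X]) ^ n - 1 :=
      Nat.findGreatest_spec (P := fun i => f ^ i ∣ (X : F[X]) ^ n - 1) (Nat.zero_le k) (by simp)
    have hj' : j < k → ¬ f ^ (j + 1) ∣ (X : F[X]) ^ n - 1 := fun hlt =>
      Nat.findGreatest_is_greatest (P := fun i => f ^ i ∣ (X : F[X]) ^ n - 1)
        (Nat.lt_succ_self j) hlt
    rw [card_annihilated hfm hfi hjk hj hj', card_annihilated hgm hgi hjk ((hiff j).1 hj)
      (fun hlt => by rw [← hiff]; exact hj' hlt), hdeg]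

/-- Block-diagonal matrices built out of companion matrices of powers of two monic
irreducible polynomials with the same degree and the same order, with the same list of
exponents, are dynamically equivalent as maps of `(F_q)^N`. -/
theorem stmt10 (F : Type*) [Field F] [Fintype F]
    (f g : F[X]) (hfm : f.Monic) (hgm : g.Monic)
    (hfi : Irreducible f) (hgi : Irreducible g)
    (hf0 : f.coeff 0 ≠ 0) (hg0 : g.coeff 0 ≠ 0)
    (hdeg : f.natDegree = g.natDegree) (hord : polyOrder f = polyOrder g)
    (m : ℕ) (lam : Fin m → ℕ) (hlam : ∀ i, 0 < lam i) :
    DynEquiv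
      ((Matrix.blockDiagonal' (fun i : Fin m => companion (f ^ lam i))).mulVec)
      ((Matrix.blockDiagonal' (fun i : Fin m => companion (g ^ lam i))).mulVec) := by
  refine dynEquiv_trans (dynEquiv_blockDiagonal _)
    (dynEquiv_trans (dynEquiv_pi fun i => ?_) (dynEquiv_symm (dynEquiv_blockDiagonal _)))
  exact dynEquiv_trans (dynEquiv_symm (dynEquiv_companion (hfm.pow _)))
    (dynEquiv_trans (dynEquiv_root hfm hgm hfi hgi hf0 hg0 hdeg hord _)
      (dynEquiv_companion (hgm.pow _)))
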